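/- Let G be a group and K a field of characteristic 0 with algebraic closure K̄. Let ρ : G → GL_n(K̄) be a semisimple representation with irreducible decomposition ρ ≅ ρ₁ ⊕ ⋯ ⊕ ρ_r. Assume: (i) Tr ρ(g) ∈ K for every g ∈ G; (ii) there exists g₀ ∈ G such that the characteristic polynomial of ρ(g₀) has n distinct roots, all lying in K. Then for every field automorphism σ ∈ Gal(K̄/K) and each i (1 ≤ i ≤ r), the representation σ∘ρ_i obtained by applying σ to all matrix entries of ρ_i is equivalent to ρ_i. -/

import Mathlib

open Matrix Polynomial

/-- A matrix representation `ρ : G → GLₙ(F)` is *defined over* a subfield `E ⊆ F` if some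
single conjugate of it has all matrix entries in `E`. -/
def MatRep.IsDefinedOver {G : Type*} [Group G] {F : Type*} [Field F] {ι : Type*}
    [Fintype ι] [DecidableEq ι]
    (ρ : G →* Matrix.GeneralLinearGroup ι F) (E : Subfield F) : Prop :=
  ∃ M : Matrix.GeneralLinearGroup ι F,
    ∀ (g : G) (i j : ι),
      ((M * ρ g * M⁻¹ : Matrix.GeneralLinearGroup ι F) : Matrix ι ι F) i j ∈ E

/-- A matrix representation is *irreducible* if the underlying space is nonzero and the only
`G`-invariant subspaces (for the `mulVec` action) are `⊥` and `⊤`. -/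
def MatRep.IsIrreducible {G : Type*} [Group G] {F : Type*} [Field F] {ι : Type*}
    [Fintype ι] [DecidableEq ι]
    (ρ : G →* Matrix.GeneralLinearGroup ι F) : Prop :=
  Nonempty ι ∧
    ∀ p : Submodule F (ι → F),
      (∀ g : G, ∀ v ∈ p, ((ρ g : Matrix ι ι F)).mulVec v ∈ p) → p = ⊥ ∨ p = ⊤

/-!
Since the characteristic polynomial of `ρ(g₀)` splits over `K` with simple roots, removing from it
one root `l` of the factor belonging to `ρᵢ` leaves a polynomial `p` over `K` for which `p(ρ(g₀))`
is a rank-one matrix `v wᵀ` supported on the component `ρᵢ`. Hence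
`Tr (ρ(g) p(ρ(g₀))) = wᵀ ρᵢ(g) v`, and the left side is a `K`-linear combination of traces of `ρ`.
So this nonzero matrix coefficient of `ρᵢ` is fixed by `σ`: it is also a matrix coefficient of
`σ ∘ ρᵢ`. Two irreducible representations with a common nonzero matrix coefficient are equivalent,
because the vectors defining it have the same annihilator in the group algebra.
-/

section SimpleModule

variable {R M N P : Type*} [Ring R] [AddCommGroup M] [Module R M] [AddCommGroup N] [Module R N]
  [AddCommGroup P] {φ : M →+ P} {ψ : N →+ P} {v : M} {w : N}

lemma ker_toSpanSingleton_le_of_map_smul_eq [IsSimpleModule R N] (hψ : ψ ≠ 0)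
    (h : ∀ a : R, φ (a • v) = ψ (a • w)) :
    LinearMap.ker (LinearMap.toSpanSingleton R M v) ≤
      LinearMap.ker (LinearMap.toSpanSingleton R N w) := by
  intro a (hav : a • v = 0)
  by_contra! (haw : a • w ≠ 0)
  refine hψ (AddMonoidHom.ext fun x => ?_)
  obtain ⟨b, rfl⟩ := IsSimpleModule.toSpanSingleton_surjective R haw x
  calc ψ (b • a • w) = φ (b • a • v) := by simp only [← mul_smul, h]
    _ = 0 := by rw [hav, smul_zero, map_zero]

lemma nonempty_linearEquiv_of_map_smul_eq [IsSimpleModule R M] [IsSimpleModule R N]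
    (hv : v ≠ 0) (hφ : φ ≠ 0) (h : ∀ a : R, φ (a • v) = ψ (a • w)) : Nonempty (M ≃ₗ[R] N) := by
  have hsurj := IsSimpleModule.toSpanSingleton_surjective R hv
  obtain ⟨a, ha⟩ : ∃ a : R, ψ (a • w) ≠ 0 := by
    obtain ⟨x, hx⟩ := DFunLike.ne_iff.1 hφ
    obtain ⟨a, rfl⟩ := hsurj x
    exact ⟨a, h a ▸ hx⟩
  have hψ : ψ ≠ 0 := by rintro rfl; exact ha rfl
  have hw : w ≠ 0 := by rintro rfl; simp at ha
  have hker : LinearMap.ker (LinearMap.toSpanSingleton R M v) =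
      LinearMap.ker (LinearMap.toSpanSingleton R N w) :=
    le_antisymm (ker_toSpanSingleton_le_of_map_smul_eq hψ h)
      (ker_toSpanSingleton_le_of_map_smul_eq hφ fun a => (h a).symm)
  exact ⟨(LinearMap.quotKerEquivOfSurjective _ hsurj).symm ≪≫ₗ Submodule.quotEquivOfEq _ _ hker ≪≫ₗ
    LinearMap.quotKerEquivOfSurjective _ (IsSimpleModule.toSpanSingleton_surjective R hw)⟩

end SimpleModule

lemma nonempty_representationEquiv_of_matrixCoeff_eq {F G V W P : Type*} [Field F] [Monoid G]
    [AddCommGroup V] [Module F V] [AddCommGroup W] [Module F W] [AddCommGroup P] [Module F P]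
    {ρ : Representation F G V} {τ : Representation F G W} [ρ.IsIrreducible] [τ.IsIrreducible]
    {φ : V →ₗ[F] P} {ψ : W →ₗ[F] P} {v : V} {w : W} (hv : v ≠ 0) (hφ : φ ≠ 0)
    (h : ∀ g, φ (ρ g v) = ψ (τ g w)) : Nonempty (ρ.Equiv τ) := by
  let φ' : ρ.asModule →ₗ[F] P := φ ∘ₗ ρ.asModuleEquiv.toLinearMap
  let ψ' : τ.asModule →ₗ[F] P := ψ ∘ₗ τ.asModuleEquiv.toLinearMap
  have hsmul (a : MonoidAlgebra F G) :
      φ' (a • ρ.asModuleEquiv.symm v) = ψ' (a • τ.asModuleEquiv.symm w) := by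
    induction a using MonoidAlgebra.induction_linear with
    | zero => simp
    | add a b ha hb => simp only [add_smul, map_add, ha, hb]
    | single g c =>
      rw [Representation.single_smul, Representation.single_smul]
      change φ (c • ρ g v) = ψ (c • τ g w)
      rw [map_smul, map_smul, h]
  have hφ' : φ'.toAddMonoidHom ≠ 0 := fun h0 =>
    hφ (LinearMap.ext fun x => DFunLike.congr_fun h0 (ρ.asModuleEquiv.symm x))
  obtain ⟨e⟩ := nonempty_linearEquiv_of_map_smul_eq (φ := φ'.toAddMonoidHom)
    (ψ := ψ'.toAddMonoidHom) (ρ.asModuleEquiv.symm.map_ne_zero_iff.2 hv) hφ' hsmul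
  let f := (Representation.IntertwiningMap.equivLinearMapAsModule ρ τ).symm e.toLinearMap
  exact ⟨.mk (LinearEquiv.ofBijective f.toLinearMap e.bijective) f.isIntertwining'⟩

namespace MatRep

variable {G F F' ι : Type*} [Group G] [Field F] [Field F'] [Fintype ι] [DecidableEq ι]

/-- The representation on column vectors `ι → F` given by a matrix representation. -/
noncomputable def toRepresentation (ρ : G →* GL ι F) : Representation F G (ι → F) :=
  (toLinAlgEquiv' : Matrix ι ι F ≃ₐ[F] _).toMonoidHom.comp ((Units.coeHom _).comp ρ)

/-- Equivalence of matrix representations of the same degree: simultaneous conjugation by an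
invertible matrix. -/
def IsEquivalent (ρ τ : G →* GL ι F) : Prop :=
  ∃ N : GL ι F, ∀ g, τ g = N * ρ g * N⁻¹

lemma IsIrreducible.toRepresentation {ρ : G →* GL ι F} (hρ : IsIrreducible ρ) :
    (toRepresentation ρ).IsIrreducible := by
  have := hρ.1
  have : Nontrivial (Subrepresentation (MatRep.toRepresentation ρ)) :=
    ⟨⊥, ⊤, fun h => bot_ne_top (congrArg Subrepresentation.toSubmodule h)⟩
  exact ⟨fun p => (hρ.2 p.toSubmodule fun g _ hv => p.apply_mem_toSubmodule g hv).imp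
    (fun h => Subrepresentation.toSubmodule_injective h)
    (fun h => Subrepresentation.toSubmodule_injective h)⟩

lemma isEquivalent_of_representationEquiv {ρ τ : G →* GL ι F}
    (e : (toRepresentation ρ).Equiv (toRepresentation τ)) : IsEquivalent ρ τ := by
  let N : GL ι F := GeneralLinearGroup.toLin.symm
    ((LinearMap.GeneralLinearGroup.generalLinearEquiv F (ι → F)).symm e.toLinearEquiv)
  have hN (v : ι → F) : (N : Matrix ι ι F) *ᵥ v = e v := LinearMap.toMatrix'_mulVec _ _
  refine ⟨N, fun g => eq_mul_inv_of_mul_eq (Units.ext (ext_of_mulVec_single fun i => ?_))⟩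
  simp only [Units.val_mul, ← mulVec_mulVec, hN]
  exact (Representation.IntertwiningMap.isIntertwining _ _ e.toIntertwiningMap g _).symm

lemma isEquivalent_of_dotProduct_mulVec_eq {ρ τ : G →* GL ι F} (hρ : IsIrreducible ρ)
    (hτ : IsIrreducible τ) {v w v' w' : ι → F} (hv : v ≠ 0) (hw : w ≠ 0)
    (h : ∀ g, w ⬝ᵥ (ρ g : Matrix ι ι F) *ᵥ v = w' ⬝ᵥ (τ g : Matrix ι ι F) *ᵥ v') :
    IsEquivalent ρ τ := by
  have := hρ.toRepresentation
  have := hτ.toRepresentation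
  obtain ⟨e⟩ := nonempty_representationEquiv_of_matrixCoeff_eq (ρ := toRepresentation ρ)
    (τ := toRepresentation τ) (ψ := dotProductEquiv F ι w') hv
    ((dotProductEquiv F ι).map_ne_zero_iff.2 hw) h
  exact isEquivalent_of_representationEquiv e

lemma IsIrreducible.map {ρ : G →* GL ι F} (hρ : IsIrreducible ρ) (σ : F ≃+* F') :
    IsIrreducible ((GeneralLinearGroup.map (σ : F →+* F')).comp ρ) := by
  let f : (ι → F) →ₛₗ[(σ : F →+* F')] (ι → F') :=
    { toFun := fun v => σ ∘ v
      map_add' := fun v w => funext fun i => map_add σ (v i) (w i)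
      map_smul' := fun c v => funext fun i => map_mul σ c (v i) }
  have hf : Function.Surjective f := σ.surjective.comp_left
  have hmulVec (g : G) (v : ι → F) : f ((ρ g : Matrix ι ι F) *ᵥ v) =
      (GeneralLinearGroup.map (σ : F →+* F') (ρ g) : Matrix ι ι F') *ᵥ f v :=
    funext (RingHom.map_mulVec (σ : F →+* F') _ v)
  refine ⟨hρ.1, fun p hp => ?_⟩
  have hcomap := hρ.2 (p.comap f) fun g v hv => by
    rw [Submodule.mem_comap, hmulVec]
    exact hp g _ hv
  rw [← Submodule.map_comap_eq_of_surjective hf p]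
  exact hcomap.imp (fun h => by rw [h, Submodule.map_bot])
    (fun h => by rw [h, Submodule.map_top, LinearMap.range_eq_top.2 hf])

end MatRep

section RankOne

variable {m n F : Type*} [Field F] [Fintype n]

lemma exists_eq_vecMulVec_of_rank_le_one {E : Matrix m n F} (hE : E.rank ≤ 1) :
    ∃ v w, E = vecMulVec v w := by
  classical
  obtain ⟨v, hv⟩ := finrank_le_one_iff.1 hE
  have hcol (j : n) : ∃ c : F, c • (v : m → F) = E.col j := by
    obtain ⟨c, hc⟩ := hv ⟨E *ᵥ Pi.single j 1, LinearMap.mem_range_self E.mulVecLin _⟩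
    exact ⟨c, by simpa using congrArg Subtype.val hc⟩
  choose w hw using hcol
  refine ⟨v, w, ext fun i j => ?_⟩
  rw [vecMulVec_apply, mul_comm]
  exact (congrFun (hw j) i).symm

variable [DecidableEq n]

lemma rank_le_rootMultiplicity_charpoly [Fintype m] {A : Matrix n n F} {E : Matrix n m F} {l : F}
    (h : A * E = l • E) : E.rank ≤ A.charpoly.rootMultiplicity l := by
  have hrange : LinearMap.range E.mulVecLin ≤ Module.End.eigenspace (toLin' A) l := by
    rintro _ ⟨x, rfl⟩
    rw [Module.End.mem_eigenspace_iff, toLin'_apply, mulVecLin_apply, mulVec_mulVec, h, smul_mulVec]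
  calc E.rank ≤ Module.finrank F (Module.End.eigenspace (toLin' A) l) :=
        Submodule.finrank_mono hrange
    _ ≤ (toLin' A).charpoly.rootMultiplicity l := LinearMap.finrank_eigenspace_le _ _
    _ = A.charpoly.rootMultiplicity l := by rw [charpoly_toLin']

lemma exists_aeval_eq_vecMulVec {A : Matrix n n F} {p : F[X]} {l : F}
    (hsep : A.charpoly.Separable) (hl : A.charpoly.IsRoot l) (hdvd : A.charpoly ∣ (X - C l) * p)
    (hp : p.eval l ≠ 0) : ∃ v w, v ≠ 0 ∧ w ≠ 0 ∧ aeval A p = vecMulVec v w := by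
  have hmul : A * aeval A p = l • aeval A p := by
    have h := aeval_eq_zero_of_dvd_aeval_eq_zero hdvd A.aeval_self_charpoly
    rwa [map_mul, map_sub, aeval_X, aeval_C, sub_mul, sub_eq_zero, ← Algebra.smul_def] at h
  have hne : aeval A p ≠ 0 := fun h0 => by
    have hmem : p.eval l ∈ spectrum F (aeval A p) :=
      spectrum.subset_polynomial_aeval A p ⟨l, mem_spectrum_iff_isRoot_charpoly.2 hl, rfl⟩
    exact spectrum.mem_iff.1 hmem (by simpa [h0] using (IsUnit.mk0 _ hp).map (algebraMap F _))
  obtain ⟨v, w, hvw⟩ := exists_eq_vecMulVec_of_rank_le_one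
    ((rank_le_rootMultiplicity_charpoly hmul).trans (rootMultiplicity_le_one_of_separable hsep l))
  refine ⟨v, w, ?_, ?_, hvw⟩ <;> rintro rfl <;> simp [hvw] at hne

end RankOne

lemma exists_isolating_polynomial {K L I : Type*} [Field K] [Field L] [Algebra K L] [Fintype I]
    {P : K[X]} (hsep : P.Separable) (hsplit : P.Splits) {f : I → L[X]}
    (hf : ∏ j, f j = P.map (algebraMap K L)) {i : I} (hi : (f i).degree ≠ 0) :
    ∃ (l : L) (p : K[X]), (f i).IsRoot l ∧ f i ∣ (X - C l) * p.map (algebraMap K L) ∧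
      (p.map (algebraMap K L)).eval l ≠ 0 ∧ ∀ j ≠ i, f j ∣ p.map (algebraMap K L) := by
  classical
  have hP : P.map (algebraMap K L) ≠ 0 := hsep.map.ne_zero
  have hfi : f i ∣ P.map (algebraMap K L) := hf ▸ Finset.dvd_prod_of_mem f (Finset.mem_univ i)
  obtain ⟨l, hl : (f i).IsRoot l⟩ :=
    ((hsplit.map (algebraMap K L)).of_dvd hP hfi).exists_eval_eq_zero hi
  obtain ⟨c, rfl⟩ := hsplit.mem_range_of_isRoot hsep.ne_zero (hl.dvd hfi)
  obtain ⟨p, rfl⟩ : X - C c ∣ P := by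
    rw [← map_dvd_map' (algebraMap K L)]
    simpa using dvd_iff_isRoot.2 (hl.dvd hfi)
  have hmap : ((X - C c) * p).map (algebraMap K L) =
      (X - C (algebraMap K L c)) * p.map (algebraMap K L) := by simp
  have hsep' := hsep.map (f := algebraMap K L)
  rw [hmap] at hf hfi hsep'
  refine ⟨_, p, hl, hfi, fun h0 => ?_, fun j hj => ?_⟩
  · exact not_isUnit_X_sub_C _ (hsep'.isCoprime.isUnit_of_dvd (dvd_iff_isRoot.2 h0))
  · have hij : (X - C (algebraMap K L c)) * f j ∣
        (X - C (algebraMap K L c)) * p.map (algebraMap K L) :=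
      calc _ ∣ f i * ∏ k ∈ Finset.univ.erase i, f k :=
            mul_dvd_mul (dvd_iff_isRoot.2 hl) (Finset.dvd_prod_of_mem f (by simp [hj]))
        _ = _ := (Finset.mul_prod_erase _ f (Finset.mem_univ i)).trans hf
    exact (mul_dvd_mul_iff_left (X_sub_C_ne_zero _)).1 hij

lemma charpoly_blockDiagonal' {R I : Type*} {κ : I → Type*} [CommRing R] [Fintype I]
    [DecidableEq I] [∀ i, Fintype (κ i)] [∀ i, DecidableEq (κ i)]
    (d : ∀ i, Matrix (κ i) (κ i) R) :
    (blockDiagonal' d).charpoly = ∏ i, (d i).charpoly := by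
  let := LinearOrder.lift' (Fintype.equivFin I) (Fintype.equivFin I).injective
  rw [charpoly, (blockTriangular_blockDiagonal' d).charmatrix.det_fintype]
  refine Finset.prod_congr rfl fun i _ => ?_
  rw [← charmatrix_toSquareBlock, ← charpoly, ← charpoly_reindex (Equiv.sigmaSubtype i)]
  congr 1
  ext x y
  simp [toSquareBlock_def, Equiv.sigmaSubtype, blockDiagonal'_apply]

lemma trace_reindex {m n R : Type*} [Fintype m] [Fintype n] [AddCommMonoid R] (e : m ≃ n)
    (A : Matrix m m R) : (reindex e e A).trace = A.trace :=
  e.symm.sum_comp fun i => A i i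

section Family

variable {G K L I : Type*} {κ : I → Type*} [Fintype I] [∀ i, Fintype (κ i)]
  [∀ i, DecidableEq (κ i)]

lemma sum_trace_mul_aeval_mem [Monoid G] [CommRing K] [CommRing L] [Algebra K L]
    {ρ : ∀ i, G →* GL (κ i) L} {S : Submodule K L}
    (hS : ∀ g, ∑ i, (ρ i g : Matrix (κ i) (κ i) L).trace ∈ S) (g g₀ : G) (p : K[X]) :
    ∑ i, ((ρ i g : Matrix (κ i) (κ i) L) *
      aeval (ρ i g₀ : Matrix (κ i) (κ i) L) p).trace ∈ S := by
  induction p using Polynomial.induction_on' with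
  | add p q hp hq =>
    simpa only [map_add, mul_add, trace_add, Finset.sum_add_distrib] using S.add_mem hp hq
  | monomial k c =>
    have h := S.smul_mem c (hS (g * g₀ ^ k))
    simpa only [aeval_monomial, ← Algebra.smul_def, mul_smul_comm, trace_smul, ← Finset.smul_sum,
      map_mul, map_pow, Units.val_mul, Units.val_pow_eq_pow_val] using h

lemma exists_dotProduct_mulVec_mem [Monoid G] [Field K] [Field L] [Algebra K L]
    {ρ : ∀ i, G →* GL (κ i) L} {g₀ : G} {P : K[X]} {S : Submodule K L}
    (hS : ∀ g, ∑ i, (ρ i g : Matrix (κ i) (κ i) L).trace ∈ S) (hsep : P.Separable)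
    (hsplit : P.Splits)
    (hP : ∏ i, (ρ i g₀ : Matrix (κ i) (κ i) L).charpoly = P.map (algebraMap K L))
    (i : I) [Nonempty (κ i)] :
    ∃ v w : κ i → L, v ≠ 0 ∧ w ≠ 0 ∧
      ∀ g, w ⬝ᵥ (ρ i g : Matrix (κ i) (κ i) L) *ᵥ v ∈ S := by
  have hdeg : (ρ i g₀ : Matrix (κ i) (κ i) L).charpoly.degree ≠ 0 := by
    rw [charpoly_degree_eq_dim]
    exact_mod_cast Fintype.card_ne_zero
  obtain ⟨l, p, hl, hdvd, hpl, hother⟩ := exists_isolating_polynomial hsep hsplit hP hdeg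
  have hsepi : (ρ i g₀ : Matrix (κ i) (κ i) L).charpoly.Separable :=
    hsep.map.of_dvd (hP ▸ Finset.dvd_prod_of_mem _ (Finset.mem_univ i))
  obtain ⟨v, w, hv, hw, hvw⟩ := exists_aeval_eq_vecMulVec hsepi hl hdvd hpl
  refine ⟨v, w, hv, hw, fun g => ?_⟩
  have hzero (j : I) (hj : j ≠ i) : aeval (ρ j g₀ : Matrix (κ j) (κ j) L) p = 0 := by
    rw [← aeval_map_algebraMap L]
    exact aeval_eq_zero_of_dvd_aeval_eq_zero (hother j hj) (aeval_self_charpoly _)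
  have hsum := sum_trace_mul_aeval_mem hS g g₀ p
  rwa [Fintype.sum_eq_single i fun j hj => by rw [hzero j hj, mul_zero, trace_zero],
    ← aeval_map_algebraMap L, hvw, mul_vecMulVec, trace_vecMulVec, dotProduct_comm] at hsum

namespace MatRep

theorem isEquivalent_map_of_sum_trace_mem [Group G] [Field K] [Field L] [Algebra K L]
    {ρ : ∀ i, G →* GL (κ i) L} {g₀ : G} {P : K[X]}
    (htr : ∀ g, ∑ i, (ρ i g : Matrix (κ i) (κ i) L).trace ∈ (algebraMap K L).fieldRange)
    (hsep : P.Separable) (hsplit : P.Splits)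
    (hP : ∏ i, (ρ i g₀ : Matrix (κ i) (κ i) L).charpoly = P.map (algebraMap K L))
    {i : I} (hirr : IsIrreducible (ρ i)) (σ : L ≃ₐ[K] L) :
    IsEquivalent (ρ i) ((GeneralLinearGroup.map (σ : L →+* L)).comp (ρ i)) := by
  have := hirr.1
  obtain ⟨v, w, hv, hw, hK⟩ := exists_dotProduct_mulVec_mem
    (S := LinearMap.range (Algebra.linearMap K L)) htr hsep hsplit hP i
  refine isEquivalent_of_dotProduct_mulVec_eq hirr (hirr.map σ.toRingEquiv) hv hw
    (v' := σ ∘ v) (w' := σ ∘ w) fun g => ?_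
  obtain ⟨c, hc⟩ := hK g
  calc w ⬝ᵥ (ρ i g : Matrix (κ i) (κ i) L) *ᵥ v
      = σ (w ⬝ᵥ (ρ i g : Matrix (κ i) (κ i) L) *ᵥ v) := by rw [← hc]; exact (σ.commutes c).symm
    _ = σ ∘ w ⬝ᵥ (ρ i g : Matrix (κ i) (κ i) L).map σ *ᵥ (σ ∘ v) := by
        simp [mulVec, dotProduct]

end MatRep

end Family

theorem component_conjugate_equivalent_general {G K L I n : Type*} {κ : I → Type*} [Group G]
    [Field K] [Field L] [Algebra K L] [Finite I] [DecidableEq I] [∀ i, Fintype (κ i)]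
    [∀ i, DecidableEq (κ i)] [Fintype n] [DecidableEq n] (ρ : G →* GL n L)
    (ρi : ∀ i, G →* GL (κ i) L) (e : (Σ i, κ i) ≃ n) (M : GL n L)
    (hdecomp : ∀ g, (ρ g : Matrix n n L) = (M : Matrix n n L) *
      reindex e e (blockDiagonal' fun i => (ρi i g : Matrix (κ i) (κ i) L)) *
        ((M⁻¹ : GL n L) : Matrix n n L))
    (htr : ∀ g, (ρ g : Matrix n n L).trace ∈ (algebraMap K L).fieldRange) (g₀ : G)
    (hg₀ : ∃ roots : n → L, Function.Injective roots ∧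
      (∀ k, roots k ∈ (algebraMap K L).fieldRange) ∧
      (ρ g₀ : Matrix n n L).charpoly = ∏ k, (X - C (roots k)))
    {i : I} (hirr : MatRep.IsIrreducible (ρi i)) (σ : L ≃ₐ[K] L) :
    MatRep.IsEquivalent (ρi i) ((GeneralLinearGroup.map (σ : L →+* L)).comp (ρi i)) := by
  cases nonempty_fintype I
  obtain ⟨roots, hinj, hrange, hchar⟩ := hg₀
  choose c hc using hrange
  have hcinj : Function.Injective c := fun k l h => hinj (by rw [← hc, ← hc, h])
  refine MatRep.isEquivalent_map_of_sum_trace_mem (fun g => ?_)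
    (separable_prod_X_sub_C_iff.2 hcinj) (Splits.prod fun k _ => Splits.X_sub_C (c k))
    (g₀ := g₀) ?_ hirr σ
  · simpa only [hdecomp, trace_units_conj, trace_reindex, trace_blockDiagonal'] using htr g
  · rw [← charpoly_blockDiagonal', ← charpoly_reindex e, ← charpoly_units_conj M,
      ← coe_units_inv, ← hdecomp, hchar]
    simp only [Polynomial.map_prod, Polynomial.map_sub, map_X, map_C, hc]

/-- **Lemma (each irreducible component is isomorphic to its Galois conjugates).**
If `ρ : G → GLₙ(K̄)` decomposes (up to conjugation) as a direct sum of irreducible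
representations `ρ₁ ⊕ ⋯ ⊕ ρᵣ`, all traces of `ρ` lie in `K`, and some `ρ(g₀)` has
characteristic polynomial with `n` distinct roots all lying in `K`, then for every
`σ ∈ Gal(K̄/K)` and every `i`, the entrywise Galois conjugate `σ ∘ ρᵢ` is equivalent
to `ρᵢ`. -/
theorem component_conjugate_equivalent
    {G : Type*} [Group G] {K : Type*} [Field K] [CharZero K] {n r : ℕ}
    (ρ : G →* Matrix.GeneralLinearGroup (Fin n) (AlgebraicClosure K))
    (m : Fin r → ℕ)
    (ρi : (i : Fin r) → G →* Matrix.GeneralLinearGroup (Fin (m i)) (AlgebraicClosure K))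
    (hirr : ∀ i, MatRep.IsIrreducible (ρi i))
    (e : (Σ i : Fin r, Fin (m i)) ≃ Fin n)
    (M : Matrix.GeneralLinearGroup (Fin n) (AlgebraicClosure K))
    (hdecomp : ∀ g : G,
      (ρ g : Matrix (Fin n) (Fin n) (AlgebraicClosure K)) =
        (M : Matrix (Fin n) (Fin n) (AlgebraicClosure K)) *
          (Matrix.reindex e e
            (Matrix.blockDiagonal' fun i =>
              ((ρi i g : Matrix (Fin (m i)) (Fin (m i)) (AlgebraicClosure K))))) *
          ((M⁻¹ : Matrix.GeneralLinearGroup (Fin n) (AlgebraicClosure K)) :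
            Matrix (Fin n) (Fin n) (AlgebraicClosure K)))
    (htr : ∀ g : G,
      (ρ g : Matrix (Fin n) (Fin n) (AlgebraicClosure K)).trace ∈
        (algebraMap K (AlgebraicClosure K)).fieldRange)
    (g₀ : G)
    (hg₀ : ∃ roots : Fin n → AlgebraicClosure K, Function.Injective roots ∧
      (∀ i, roots i ∈ (algebraMap K (AlgebraicClosure K)).fieldRange) ∧
      (ρ g₀ : Matrix (Fin n) (Fin n) (AlgebraicClosure K)).charpoly =
        ∏ i, (X - C (roots i))) :
    ∀ (σ : AlgebraicClosure K ≃ₐ[K] AlgebraicClosure K) (i : Fin r),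
      ∃ N : Matrix.GeneralLinearGroup (Fin (m i)) (AlgebraicClosure K),
        ∀ g : G,
          (ρi i g : Matrix (Fin (m i)) (Fin (m i)) (AlgebraicClosure K)).map σ =
            (N : Matrix (Fin (m i)) (Fin (m i)) (AlgebraicClosure K)) *
              (ρi i g : Matrix (Fin (m i)) (Fin (m i)) (AlgebraicClosure K)) *
              ((N⁻¹ : Matrix.GeneralLinearGroup (Fin (m i)) (AlgebraicClosure K)) :
                Matrix (Fin (m i)) (Fin (m i)) (AlgebraicClosure K)) := by
  exact fun σ i => Exists.imp (fun _ hN g => congrArg Units.val (hN g))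
    (component_conjugate_equivalent_general ρ ρi e M hdecomp htr g₀ hg₀ (hirr i) σ)
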